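/- Let (X,d) be a metric space, let e : X → E be an injective hull of X, and let S ⊆ P₁(X) be a subset such that δ_x ∈ S for all x ∈ X. If β : S → X is a map that is 1-Lipschitz with respect to W₁ and satisfies β(δ_x) = x for all x ∈ X, then there exists a contracting barycenter map β̄ : P₁(E) → E such that e(β(s)) = β̄(e_♯ s) for all s ∈ S. -/

import Mathlib

universe u

open scoped ENNReal
open MeasureTheory

/-- A metric space `Y` is injective if every `1`-Lipschitz map into `Y` defined on a subset
of a metric space `B` extends to a `1`-Lipschitz map on all of `B`. -/
def IsInjectiveMetricSpace (Y : Type u) [MetricSpace Y] : Prop :=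
  ∀ (B : Type u) [MetricSpace B] (A : Set B) (f : A → Y),
    LipschitzWith 1 f → ∃ g : B → Y, LipschitzWith 1 g ∧ ∀ a : A, g ↑a = f a

/-- An isometric embedding `e : X → E` into an injective metric space `E` is an injective hull
if every `1`-Lipschitz map `f : E → Z` such that `f ∘ e` is an isometric embedding is itself
an isometric embedding. -/
def IsInjectiveHull {X : Type u} {E : Type u} [MetricSpace X] [MetricSpace E] (e : X → E) :
    Prop :=
  Isometry e ∧ IsInjectiveMetricSpace E ∧
    ∀ (Z : Type u) [MetricSpace Z] (f : E → Z),
      LipschitzWith 1 f → Isometry (f ∘ e) → Isometry f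

/-- The first Wasserstein distance between two (probability) measures: the infimum of
`∫ d(x,y) dγ` over all couplings `γ` of the pair, i.e. probability measures on `X × X`
with first marginal `μ` and second marginal `ν`. -/
noncomputable def W1 {X : Type*} [MetricSpace X] [MeasurableSpace X]
    (μ ν : MeasureTheory.Measure X) : ℝ≥0∞ :=
  ⨅ (γ : MeasureTheory.Measure (X × X)) (_ : MeasureTheory.IsProbabilityMeasure γ ∧
      γ.map Prod.fst = μ ∧ γ.map Prod.snd = ν),
    ∫⁻ p, edist p.1 p.2 ∂γ

/-- Membership in `P₁(X)`: a Radon probability measure with finite first moment. -/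
def MemP1 {X : Type*} [MetricSpace X] [MeasurableSpace X]
    (μ : MeasureTheory.Measure X) : Prop :=
  MeasureTheory.IsProbabilityMeasure μ ∧ μ.InnerRegular ∧
    ∀ x₀ : X, (∫⁻ x, edist x x₀ ∂μ) ≠ ⊤

/-- `P₁(X)`: the space of Radon probability measures on `X` with finite first moment. -/
abbrev P1 (X : Type*) [MetricSpace X] [MeasurableSpace X] : Type _ :=
  {μ : MeasureTheory.Measure X // MemP1 μ}

/-- A contracting barycenter map: a `1`-Lipschitz map `β : P₁(X) → X` (with respect to the
first Wasserstein distance) such that `β δ_x = x` for every `x`. -/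
def IsContractingBarycenter {X : Type*} [MetricSpace X] [MeasurableSpace X]
    (β : P1 X → X) : Prop :=
  (∀ μ ν : P1 X, edist (β μ) (β ν) ≤ W1 μ.1 ν.1) ∧
    ∀ (x : X) (μ : P1 X), μ.1 = MeasureTheory.Measure.dirac x → β μ = x

/-! Let `δ_y` be the Dirac mass at `y`. On `P₁(E)` the Wasserstein distance is a finite
pseudometric, and `e_♯ : P₁(X) → P₁(E)` does not decrease it, so `e_♯ μ ↦ e (β μ)` is well defined
and `1`-Lipschitz on `e_♯ S`. Injectivity of `E` extends it to a `1`-Lipschitz map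
`β̄ : P₁(E) → E`. Then `y ↦ β̄ δ_y` is a `1`-Lipschitz self-map of `E` fixing `e(X)`, hence an
isometry by the hull property, so it preserves the distances to `e(X)`. These distances determine
the points of `E`: the map `y ↦ (d(y, e x))_x` is `1`-Lipschitz and isometric on `e(X)`, hence
injective, again by the hull property. So `β̄ δ_y = y`.

A metric space is not assumed standard Borel, so couplings cannot be glued along a common marginal
by disintegration. They are glued instead along a countable measurable partition of the middle
space into pieces of diameter less than `ε`, at the cost of an error `ε`. -/

section MeasurePreserving

variable {α β : Type*} [MeasurableSpace α] [MeasurableSpace β] {μ : Measure α} {ν : Measure β}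
  {f : α → β}

lemma isProbabilityMeasure_iff_of_measurePreserving
    (hf : MeasurePreserving f μ ν) : IsProbabilityMeasure ν ↔ IsProbabilityMeasure μ := by
  rw [← hf.map_eq, Measure.isProbabilityMeasure_map_iff hf.aemeasurable]

lemma lintegral_comp_measurePreserving {φ : β → ℝ≥0∞} (hf : MeasurePreserving f μ ν)
    (hφ : AEMeasurable φ ν) : ∫⁻ a, φ (f a) ∂μ = ∫⁻ b, φ b ∂ν := by
  rw [← hf.map_eq] at hφ ⊢
  exact (lintegral_map' hφ hf.aemeasurable).symm

end MeasurePreserving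

section FiberProd

variable {α β ι : Type*} [MeasurableSpace α] [MeasurableSpace β] [MeasurableSpace ι]
  {ρ : Measure ι} {f : α → ι} {g : β → ι} {μ : Measure α} {ν : Measure β}

/-- The fibre product over a countable space `(ι, ρ)` of measures `μ` and `ν` whose images under
`f` and `g` are `ρ`: the coupling under which the two coordinates are conditionally independent
given their common image in `ι`. The fibres over points of `ρ`-measure zero contribute nothing,
since `μ` and `ν` vanish on them. -/
noncomputable def fiberProd (ρ : Measure ι) (f : α → ι) (g : β → ι) (μ : Measure α)
    (ν : Measure β) : Measure (α × β) :=
  Measure.sum fun i => (ρ {i})⁻¹ • (μ.restrict (f ⁻¹' {i})).prod (ν.restrict (g ⁻¹' {i}))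

variable [MeasurableSingletonClass ι]

lemma inv_smul_smul_restrict_fiber [SigmaFinite ρ] (hf : MeasurePreserving f μ ρ) (i : ι) :
    (ρ {i})⁻¹ • ρ {i} • μ.restrict (f ⁻¹' {i}) = μ.restrict (f ⁻¹' {i}) := by
  rcases eq_or_ne (ρ {i}) 0 with h | h
  · have hnull : μ (f ⁻¹' {i}) = 0 :=
      (hf.measure_preimage (measurableSet_singleton i).nullMeasurableSet).trans h
    simp [Measure.restrict_eq_zero.2 hnull]
  · rw [smul_smul, ENNReal.inv_mul_cancel h measure_singleton_lt_top.ne, one_smul]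

variable [Countable ι]

lemma sum_restrict_fiber (hf : Measurable f) (μ : Measure α) :
    (Measure.sum fun i => μ.restrict (f ⁻¹' {i})) = μ := by
  rw [← Measure.restrict_iUnion (pairwise_disjoint_fiber f)
    fun i => hf (measurableSet_singleton i), ← Set.preimage_iUnion, Set.iUnion_of_singleton,
    Set.preimage_univ, Measure.restrict_univ]

lemma measurePreserving_fst_fiberProd [SigmaFinite ρ] (hf : MeasurePreserving f μ ρ)
    (hg : MeasurePreserving g ν ρ) : MeasurePreserving Prod.fst (fiberProd ρ f g μ ν) μ := by
  have := hg.sigmaFinite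
  refine ⟨measurable_fst, ?_⟩
  rw [fiberProd, Measure.map_sum measurable_fst.aemeasurable]
  simp only [Measure.map_smul, Measure.map_fst_prod, Measure.restrict_apply_univ,
    hg.measure_preimage (measurableSet_singleton _).nullMeasurableSet,
    inv_smul_smul_restrict_fiber hf]
  exact sum_restrict_fiber hf.measurable μ

lemma measurePreserving_snd_fiberProd [SigmaFinite ρ] (hf : MeasurePreserving f μ ρ)
    (hg : MeasurePreserving g ν ρ) : MeasurePreserving Prod.snd (fiberProd ρ f g μ ν) ν := by
  have := hf.sigmaFinite
  have := hg.sigmaFinite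
  refine ⟨measurable_snd, ?_⟩
  rw [fiberProd, Measure.map_sum measurable_snd.aemeasurable]
  simp only [Measure.map_smul, Measure.map_snd_prod, Measure.restrict_apply_univ,
    hf.measure_preimage (measurableSet_singleton _).nullMeasurableSet,
    inv_smul_smul_restrict_fiber hg]
  exact sum_restrict_fiber hg.measurable ν

lemma ae_eq_fiberProd [SFinite μ] [SFinite ν] (hf : Measurable f) (hg : Measurable g) :
    ∀ᵐ p ∂fiberProd ρ f g μ ν, f p.1 = g p.2 := by
  refine Measure.ae_sum_iff.2 fun i => Measure.ae_smul_measure ?_ _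
  rw [Measure.prod_restrict]
  filter_upwards [ae_restrict_mem ((hf (measurableSet_singleton i)).prod
    (hg (measurableSet_singleton i)))] with p hp
  exact hp.1.trans hp.2.symm

end FiberProd

section Gluing

variable {α β Z : Type*} [MeasurableSpace α] [MeasurableSpace β] [PseudoMetricSpace Z]
  [MeasurableSpace Z] {ρ : Measure Z} {ε : ℝ≥0∞}

lemma exists_measurable_nat_forall_edist_lt [OpensMeasurableSpace Z]
    (hρ : AEStronglyMeasurable id ρ) (hε : 0 < ε) :
    ∃ i : Z → ℕ, Measurable i ∧
      ∃ t ∈ ae ρ, ∀ x ∈ t, ∀ y ∈ t, i x = i y → edist x y < ε := by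
  classical
  obtain ⟨t, ⟨c, hc, htc⟩, ht⟩ := hρ.isSeparable_ae_range
  rcases c.eq_empty_or_nonempty with rfl | hne
  · exact ⟨0, measurable_const, t, ht, fun x hx => by simpa using htc hx⟩
  obtain ⟨u, rfl⟩ := hc.exists_eq_range hne
  let U : Set Z := ⋃ n, Metric.eball (u n) (ε / 2)
  have hex (x : Z) : ∃ n, x ∈ Metric.eball (u n) (ε / 2) ∪ Uᶜ := by
    by_cases hx : x ∈ U
    · exact (Set.mem_iUnion.1 hx).imp fun n => Or.inl
    · exact ⟨0, Or.inr hx⟩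
  have htU : t ⊆ U := fun x hx => by
    obtain ⟨_, ⟨n, rfl⟩, hn⟩ := EMetric.mem_closure_iff.1 (htc hx) _ (ENNReal.half_pos hε.ne')
    exact Set.mem_iUnion.2 ⟨n, hn⟩
  have hfind (x : Z) (hx : x ∈ t) : edist x (u (Nat.find (hex x))) < ε / 2 :=
    (Nat.find_spec (hex x)).resolve_right fun h => h (htU hx)
  refine ⟨fun x => Nat.find (hex x), measurable_find hex fun n => ?_, t, ht,
    fun x hx y hy hxy => ?_⟩
  · exact Metric.isOpen_eball.measurableSet.union
      (isOpen_iUnion fun _ => Metric.isOpen_eball).measurableSet.compl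
  · have hy' : edist y (u (Nat.find (hex x))) < ε / 2 := by simpa only [hxy] using hfind y hy
    calc edist x y ≤ edist x (u (Nat.find (hex x))) + edist y (u (Nat.find (hex x))) :=
          edist_triangle_right _ _ _
      _ < ε / 2 + ε / 2 := ENNReal.add_lt_add (hfind x hx) hy'
      _ = ε := ENNReal.add_halves ε

theorem exists_coupling_ae_edist_lt [OpensMeasurableSpace Z] {μ : Measure α} {ν : Measure β}
    [IsFiniteMeasure ρ] {f : α → Z} {g : β → Z} (hf : MeasurePreserving f μ ρ)
    (hg : MeasurePreserving g ν ρ) (hρ : AEStronglyMeasurable id ρ) (hε : 0 < ε) :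
    ∃ Γ : Measure (α × β), MeasurePreserving Prod.fst Γ μ ∧ MeasurePreserving Prod.snd Γ ν ∧
      ∀ᵐ p ∂Γ, edist (f p.1) (g p.2) < ε := by
  obtain ⟨i, hi, t, ht, hit⟩ := exists_measurable_nat_forall_edist_lt hρ hε
  have := hf.sigmaFinite
  have := hg.sigmaFinite
  have hif := (hi.measurePreserving ρ).comp hf
  have hig := (hi.measurePreserving ρ).comp hg
  have hfst := measurePreserving_fst_fiberProd hif hig
  have hsnd := measurePreserving_snd_fiberProd hif hig
  refine ⟨fiberProd (ρ.map i) (i ∘ f) (i ∘ g) μ ν, hfst, hsnd, ?_⟩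
  filter_upwards [(hf.comp hfst).quasiMeasurePreserving.ae ht,
    (hg.comp hsnd).quasiMeasurePreserving.ae ht,
    ae_eq_fiberProd hif.measurable hig.measurable] with p hp₁ hp₂ hp
  exact hit _ hp₁ _ hp₂ hp

end Gluing

section Wasserstein

variable {X : Type*} [MetricSpace X] [MeasurableSpace X] {μ ν ρ : Measure X}

lemma W1_le_lintegral_edist {α : Type*} [MeasurableSpace α] {Γ : Measure α}
    [IsProbabilityMeasure Γ] {f g : α → X} (hf : MeasurePreserving f Γ μ)
    (hg : MeasurePreserving g Γ ν) : W1 μ ν ≤ ∫⁻ a, edist (f a) (g a) ∂Γ := by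
  have hfg := hf.measurable.prodMk hg.measurable
  refine (iInf₂_le (Γ.map fun a => (f a, g a))
    ⟨Measure.isProbabilityMeasure_map hfg.aemeasurable, ?_, ?_⟩).trans (lintegral_map_le _ _)
  · rw [Measure.map_map measurable_fst hfg, ← hf.map_eq]; rfl
  · rw [Measure.map_map measurable_snd hfg, ← hg.map_eq]; rfl

lemma W1_self [IsProbabilityMeasure μ] : W1 μ μ = 0 := by
  simpa using W1_le_lintegral_edist (MeasurePreserving.id μ) (MeasurePreserving.id μ)

lemma W1_comm (μ ν : Measure X) : W1 μ ν = W1 ν μ := by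
  have hle (μ ν : Measure X) : W1 μ ν ≤ W1 ν μ := le_iInf₂ fun γ ⟨_, hfst, hsnd⟩ => by
    simpa only [edist_comm] using
      W1_le_lintegral_edist ⟨measurable_snd, hsnd⟩ ⟨measurable_fst, hfst⟩
  exact le_antisymm (hle μ ν) (hle ν μ)

lemma W1_dirac_le (x y : X) : W1 (Measure.dirac x) (Measure.dirac y) ≤ edist x y := by
  have hconst (z : X) :
      MeasurePreserving (fun _ : Unit => z) (Measure.dirac ()) (Measure.dirac z) :=
    ⟨measurable_const, Measure.map_dirac' measurable_const ()⟩
  simpa using W1_le_lintegral_edist (hconst x) (hconst y)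

lemma W1_le_lintegral_edist_add [OpensMeasurableSpace X] [IsProbabilityMeasure μ]
    [IsProbabilityMeasure ν] (x₀ : X) :
    W1 μ ν ≤ ∫⁻ x, edist x x₀ ∂μ + ∫⁻ x, edist x x₀ ∂ν := by
  have hfst := measurePreserving_fst (μ := μ) (ν := ν)
  have hsnd := measurePreserving_snd (μ := μ) (ν := ν)
  have hm : Measurable fun x : X => edist x x₀ := measurable_edist_left
  calc W1 μ ν ≤ ∫⁻ p, edist p.1 p.2 ∂μ.prod ν := W1_le_lintegral_edist hfst hsnd
    _ ≤ ∫⁻ p, (edist p.1 x₀ + edist p.2 x₀) ∂μ.prod ν :=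
        lintegral_mono fun p => edist_triangle_right _ _ _
    _ = ∫⁻ x, edist x x₀ ∂μ + ∫⁻ x, edist x x₀ ∂ν := by
        rw [← hfst.lintegral_comp hm, ← hsnd.lintegral_comp hm]
        exact lintegral_add_left (hm.comp measurable_fst) _

lemma aemeasurable_edist_of_marginals {γ : Measure (X × X)} (hμ : AEStronglyMeasurable id μ)
    (hν : AEStronglyMeasurable id ν) (hfst : MeasurePreserving Prod.fst γ μ)
    (hsnd : MeasurePreserving Prod.snd γ ν) :
    AEMeasurable (fun p : X × X => edist p.1 p.2) γ :=
  (hμ.comp_measurePreserving hfst).edist (hν.comp_measurePreserving hsnd)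

theorem W1_triangle [OpensMeasurableSpace X] (hμ : AEStronglyMeasurable id μ)
    (hρ : AEStronglyMeasurable id ρ) (hν : AEStronglyMeasurable id ν) :
    W1 μ ν ≤ W1 μ ρ + W1 ρ ν := by
  refine ENNReal.le_iInf₂_add_iInf₂ fun γ₁ ⟨_, hγ₁μ, hγ₁ρ⟩ γ₂ ⟨_, hγ₂ρ, hγ₂ν⟩ => ?_
  refine ENNReal.le_of_forall_pos_le_add fun ε hε _ => ?_
  have hγ₁μ : MeasurePreserving Prod.fst γ₁ μ := ⟨measurable_fst, hγ₁μ⟩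
  have hγ₁ρ : MeasurePreserving Prod.snd γ₁ ρ := ⟨measurable_snd, hγ₁ρ⟩
  have hγ₂ρ : MeasurePreserving Prod.fst γ₂ ρ := ⟨measurable_fst, hγ₂ρ⟩
  have hγ₂ν : MeasurePreserving Prod.snd γ₂ ν := ⟨measurable_snd, hγ₂ν⟩
  have : IsProbabilityMeasure ρ :=
    (isProbabilityMeasure_iff_of_measurePreserving hγ₁ρ).2 inferInstance
  obtain ⟨Γ, hΓ₁, hΓ₂, hmid⟩ :=
    exists_coupling_ae_edist_lt hγ₁ρ hγ₂ρ hρ (ENNReal.coe_pos.2 hε)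
  have : IsProbabilityMeasure Γ :=
    (isProbabilityMeasure_iff_of_measurePreserving hΓ₁).1 inferInstance
  have hm₁ := aemeasurable_edist_of_marginals hμ hρ hγ₁μ hγ₁ρ
  have hm₂ := aemeasurable_edist_of_marginals hρ hν hγ₂ρ hγ₂ν
  calc W1 μ ν ≤ ∫⁻ p, edist p.1.1 p.2.2 ∂Γ :=
        W1_le_lintegral_edist (hγ₁μ.comp hΓ₁) (hγ₂ν.comp hΓ₂)
    _ ≤ ∫⁻ p, (edist p.1.1 p.1.2 + (edist p.2.1 p.2.2 + ε)) ∂Γ := by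
        refine lintegral_mono_ae (hmid.mono fun p hp => ?_)
        calc edist p.1.1 p.2.2
            ≤ edist p.1.1 p.1.2 + edist p.1.2 p.2.1 + edist p.2.1 p.2.2 := edist_triangle4 _ _ _ _
          _ ≤ edist p.1.1 p.1.2 + ε + edist p.2.1 p.2.2 := by gcongr
          _ = edist p.1.1 p.1.2 + (edist p.2.1 p.2.2 + ε) := by ring
    _ = ∫⁻ p, edist p.1 p.2 ∂γ₁ + ∫⁻ p, edist p.1 p.2 ∂γ₂ + ε := by
        have hm₁Γ : AEMeasurable (fun p : (X × X) × X × X => edist p.1.1 p.1.2) Γ :=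
          hm₁.comp_quasiMeasurePreserving hΓ₁.quasiMeasurePreserving
        rw [lintegral_add_left' hm₁Γ, lintegral_add_right _ measurable_const, lintegral_const,
          measure_univ, mul_one, ← add_assoc, ← lintegral_comp_measurePreserving hΓ₁ hm₁,
          ← lintegral_comp_measurePreserving hΓ₂ hm₂]

theorem W1_le_W1_map {E : Type*} [MetricSpace E] [MeasurableSpace E] [OpensMeasurableSpace X]
    [BorelSpace E] {e : X → E} (he : Isometry e) (hμ : AEStronglyMeasurable id (μ.map e))
    (hν : AEStronglyMeasurable id (ν.map e)) : W1 μ ν ≤ W1 (μ.map e) (ν.map e) := by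
  refine le_iInf₂ fun γ ⟨_, hγμ, hγν⟩ => ENNReal.le_of_forall_pos_le_add fun ε hε _ => ?_
  have hεpos : (0 : ℝ≥0∞) < ε / 2 := ENNReal.half_pos (ENNReal.coe_pos.2 hε).ne'
  have heμ := he.continuous.measurable.measurePreserving μ
  have heν := he.continuous.measurable.measurePreserving ν
  have hγμ : MeasurePreserving Prod.fst γ (μ.map e) := ⟨measurable_fst, hγμ⟩
  have hγν : MeasurePreserving Prod.snd γ (ν.map e) := ⟨measurable_snd, hγν⟩
  have : IsProbabilityMeasure (μ.map e) :=
    (isProbabilityMeasure_iff_of_measurePreserving hγμ).2 inferInstance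
  have : IsProbabilityMeasure (ν.map e) :=
    (isProbabilityMeasure_iff_of_measurePreserving hγν).2 inferInstance
  obtain ⟨Γ₁, hΓ₁μ, hΓ₁γ, hleft⟩ := exists_coupling_ae_edist_lt heμ hγμ hμ hεpos
  obtain ⟨Γ, hΓ₁, hΓν, hright⟩ :=
    exists_coupling_ae_edist_lt (hγν.comp hΓ₁γ) heν hν hεpos
  have hΓγ := hΓ₁γ.comp hΓ₁
  have : IsProbabilityMeasure Γ :=
    (isProbabilityMeasure_iff_of_measurePreserving hΓγ).1 inferInstance
  have hm := aemeasurable_edist_of_marginals hμ hν hγμ hγν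
  calc W1 μ ν ≤ ∫⁻ p, edist p.1.1 p.2 ∂Γ :=
        W1_le_lintegral_edist (hΓ₁μ.comp hΓ₁) hΓν
    _ ≤ ∫⁻ p, (edist p.1.2.1 p.1.2.2 + ε) ∂Γ := by
        refine lintegral_mono_ae ?_
        filter_upwards [hΓ₁.quasiMeasurePreserving.ae hleft, hright] with p hp₁ hp₂
        calc edist p.1.1 p.2 = edist (e p.1.1) (e p.2) := (he.edist_eq _ _).symm
          _ ≤ edist (e p.1.1) p.1.2.1 + edist p.1.2.1 p.1.2.2 + edist p.1.2.2 (e p.2) :=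
              edist_triangle4 _ _ _ _
          _ ≤ ε / 2 + edist p.1.2.1 p.1.2.2 + ε / 2 := by gcongr; exact hp₂.le
          _ = edist p.1.2.1 p.1.2.2 + ε := by
              rw [add_right_comm, ENNReal.add_halves, add_comm]
    _ = ∫⁻ p, edist p.1 p.2 ∂γ + ε := by
        rw [lintegral_add_right _ measurable_const, lintegral_const, measure_univ, mul_one]
        exact congrArg (· + (ε : ℝ≥0∞)) (lintegral_comp_measurePreserving hΓγ hm)

end Wasserstein

section P1

variable {X Y : Type*} [MetricSpace X] [MeasurableSpace X] [MetricSpace Y]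
  [MeasurableSpace Y]

lemma aestronglyMeasurable_id_of_innerRegular [BorelSpace X] {μ : Measure X}
    [IsFiniteMeasure μ] [μ.InnerRegular] : AEStronglyMeasurable id μ := by
  have htight : IsTightMeasureSet {μ} := isTightMeasureSet_singleton_of_innerRegular
  rw [isTightMeasureSet_iff_exists_isCompact_measure_compl_le] at htight
  choose K hK hμK using fun n : ℕ => htight (n : ℝ≥0∞)⁻¹ (by simp)
  refine aestronglyMeasurable_iff_aemeasurable_separable.2 ⟨aemeasurable_id, ⋃ n, K n,
    .iUnion fun n => (hK n).isSeparable, ?_⟩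
  refine le_antisymm (ge_of_tendsto' ENNReal.tendsto_inv_nat_nhds_zero fun n => ?_) bot_le
  exact (measure_mono (Set.compl_subset_compl.2 (Set.subset_iUnion K n))).trans (hμK n μ rfl)

lemma MemP1.aestronglyMeasurable_id [BorelSpace X] {μ : Measure X} (hμ : MemP1 μ) :
    AEStronglyMeasurable id μ :=
  have := hμ.1
  have := hμ.2.1
  aestronglyMeasurable_id_of_innerRegular

lemma memP1_dirac [OpensMeasurableSpace X] (x : X) : MemP1 (Measure.dirac x) := by
  refine ⟨inferInstance, ⟨fun s hs r hr => ?_⟩, fun x₀ => ?_⟩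
  · have hx : x ∈ s := by
      by_contra hx
      simp [Measure.dirac_apply' x hs, hx] at hr
    exact ⟨{x}, Set.singleton_subset_iff.2 hx, isCompact_singleton,
      by simpa [Measure.dirac_apply' x hs, hx] using hr⟩
  · rw [lintegral_dirac]
    exact edist_ne_top _ _

lemma MemP1.map [BorelSpace X] [BorelSpace Y] {μ : Measure X} (hμ : MemP1 μ) {K : NNReal}
    {f : X → Y} (hf : LipschitzWith K f) : MemP1 (μ.map f) := by
  obtain ⟨_, _, hmoment⟩ := hμ
  have hfm : Measurable f := hf.continuous.measurable
  have hprob : IsProbabilityMeasure (μ.map f) := Measure.isProbabilityMeasure_map hfm.aemeasurable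
  have : (μ.map f).InnerRegularCompactLTTop :=
    Measure.InnerRegularCompactLTTop.map_of_continuous hf.continuous
  refine ⟨hprob, inferInstance, fun y => ?_⟩
  obtain ⟨x₀⟩ := nonempty_of_isProbabilityMeasure μ
  have hbound : ∫⁻ z, edist z y ∂μ.map f ≤ K * ∫⁻ x, edist x x₀ ∂μ + edist (f x₀) y := by
    calc ∫⁻ z, edist z y ∂μ.map f = ∫⁻ x, edist (f x) y ∂μ :=
          lintegral_map measurable_edist_left hfm
      _ ≤ ∫⁻ x, (K * edist x x₀ + edist (f x₀) y) ∂μ := lintegral_mono fun x =>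
          (edist_triangle _ (f x₀) _).trans (add_le_add_left (hf x x₀) _)
      _ = K * ∫⁻ x, edist x x₀ ∂μ + edist (f x₀) y := by
          rw [lintegral_add_right _ measurable_const, lintegral_const, measure_univ, mul_one,
            lintegral_const_mul _ measurable_edist_left]
  exact ne_top_of_le_ne_top (ENNReal.add_ne_top.2
    ⟨ENNReal.mul_ne_top ENNReal.coe_ne_top (hmoment x₀), edist_ne_top _ _⟩) hbound

/-- The Dirac mass at a point, as an element of `P₁`. -/
noncomputable def P1.dirac [OpensMeasurableSpace X] (x : X) : P1 X :=
  ⟨Measure.dirac x, memP1_dirac x⟩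

/-- The push-forward `f_♯ : P₁(X) → P₁(Y)` along a Lipschitz map. -/
noncomputable def P1.map [BorelSpace X] [BorelSpace Y] {K : NNReal} (f : X → Y)
    (hf : LipschitzWith K f) (μ : P1 X) : P1 Y :=
  ⟨μ.1.map f, μ.2.map hf⟩

lemma P1.map_dirac [BorelSpace X] [BorelSpace Y] {K : NNReal} {f : X → Y}
    (hf : LipschitzWith K f) (x : X) : P1.map f hf (P1.dirac x) = P1.dirac (f x) :=
  Subtype.ext (Measure.map_dirac' hf.continuous.measurable x)

lemma MemP1.W1_ne_top [OpensMeasurableSpace X] {μ ν : Measure X} (hμ : MemP1 μ)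
    (hν : MemP1 ν) : W1 μ ν ≠ ⊤ := by
  have := hμ.1
  have := hν.1
  obtain ⟨x₀⟩ := nonempty_of_isProbabilityMeasure μ
  exact ne_top_of_le_ne_top (ENNReal.add_ne_top.2 ⟨hμ.2.2 x₀, hν.2.2 x₀⟩)
    (W1_le_lintegral_edist_add x₀)

/-- The first Wasserstein distance as a pseudometric on `P₁(X)`. -/
noncomputable instance P1.instPseudoMetricSpace [BorelSpace X] :
    PseudoMetricSpace (P1 X) :=
  letI : PseudoEMetricSpace (P1 X) :=
    { edist := fun μ ν => W1 μ.1 ν.1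
      edist_self := fun μ => have := μ.2.1; W1_self
      edist_comm := fun μ ν => W1_comm μ.1 ν.1
      edist_triangle := fun μ ρ ν => W1_triangle μ.2.aestronglyMeasurable_id
        ρ.2.aestronglyMeasurable_id ν.2.aestronglyMeasurable_id }
  PseudoEMetricSpace.toPseudoMetricSpace fun μ ν => μ.2.W1_ne_top ν.2

lemma P1.edist_eq_W1 [BorelSpace X] (μ ν : P1 X) : edist μ ν = W1 μ.1 ν.1 := rfl

lemma P1.lipschitzWith_dirac [BorelSpace X] :
    LipschitzWith 1 (P1.dirac : X → P1 X) := fun x y => by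
  rw [ENNReal.coe_one, one_mul, P1.edist_eq_W1]
  exact W1_dirac_le x y

end P1

section InjectiveHull

lemma IsInjectiveMetricSpace.exists_lipschitzWith_comp_eq {ι : Type*} {P Y : Type u}
    [PseudoMetricSpace P] [MetricSpace Y] (hY : IsInjectiveMetricSpace Y) {j : ι → P}
    {f : ι → Y} (hfj : ∀ i k, edist (f i) (f k) ≤ edist (j i) (j k)) :
    ∃ g : P → Y, LipschitzWith 1 g ∧ ∀ i, g (j i) = f i := by
  let π : P → SeparationQuotient P := SeparationQuotient.mk
  choose s hs using fun a : Set.range (π ∘ j) => a.2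
  have hlip : LipschitzWith 1 (f ∘ s) := fun a b => by
    rw [ENNReal.coe_one, one_mul, Subtype.edist_eq, ← hs a, ← hs b]
    exact (hfj _ _).trans_eq (SeparationQuotient.edist_mk _ _).symm
  obtain ⟨g, hg, hgs⟩ := hY (SeparationQuotient P) _ (f ∘ s) hlip
  refine ⟨g ∘ π, fun p q => (hg (π p) (π q)).trans_eq (by rw [SeparationQuotient.edist_mk]),
    fun i => ?_⟩
  let a : Set.range (π ∘ j) := ⟨π (j i), i, rfl⟩
  refine (hgs a).trans (edist_le_zero.1 ((hfj _ _).trans_eq ?_))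
  rw [← SeparationQuotient.edist_mk]
  exact (congrArg (edist · (π (j i))) (hs a)).trans (edist_self _)

section Kuratowski

variable {X E : Type*} [TopologicalSpace X] [PseudoMetricSpace E] {e : X → E}

/-- The Kuratowski map of `E` relative to `e : X → E`, sending `z` to `x ↦ d(z, e x)`. The
distances to a base point `y₀` are subtracted to make this function bounded. -/
noncomputable def kuratowskiMap (e : X → E) (he : Continuous e) (y₀ z : E) :
    BoundedContinuousFunction X ℝ :=
  .ofNormedAddCommGroup (fun x => dist z (e x) - dist y₀ (e x))
    ((continuous_const.dist he).sub (continuous_const.dist he)) (dist z y₀)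
    fun x => abs_dist_sub_le z y₀ (e x)

lemma kuratowskiMap_apply (he : Continuous e) (y₀ z : E) (x : X) :
    kuratowskiMap e he y₀ z x = dist z (e x) - dist y₀ (e x) := rfl

lemma dist_kuratowskiMap_apply (he : Continuous e) (y₀ z w : E) (x : X) :
    dist (kuratowskiMap e he y₀ z x) (kuratowskiMap e he y₀ w x) =
      |dist z (e x) - dist w (e x)| := by
  rw [kuratowskiMap_apply, kuratowskiMap_apply, Real.dist_eq, sub_sub_sub_cancel_right]

lemma lipschitzWith_kuratowskiMap (he : Continuous e) (y₀ : E) :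
    LipschitzWith 1 (kuratowskiMap e he y₀) :=
  .mk_one fun z w => (BoundedContinuousFunction.dist_le dist_nonneg).2 fun x =>
    (dist_kuratowskiMap_apply he y₀ z w x).trans_le (abs_dist_sub_le z w (e x))

end Kuratowski

lemma isometry_kuratowskiMap_comp {X E : Type*} [PseudoMetricSpace X] [PseudoMetricSpace E]
    {e : X → E} (he : Isometry e) (y₀ : E) : Isometry (kuratowskiMap e he.continuous y₀ ∘ e) := by
  refine .of_dist_eq fun x x' => le_antisymm ?_ ?_
  · simpa [he.dist_eq] using
      (lipschitzWith_kuratowskiMap he.continuous y₀).dist_le_mul (e x) (e x')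
  · refine le_trans ?_ (BoundedContinuousFunction.dist_coe_le_dist x')
    simp [dist_kuratowskiMap_apply, he.dist_eq]

namespace IsInjectiveHull

variable {X E : Type u} [MetricSpace X] [MetricSpace E] {e : X → E}

lemma eq_of_forall_dist_eq (he : IsInjectiveHull e) {y z : E}
    (h : ∀ x, dist y (e x) = dist z (e x)) : y = z := by
  have hiso : Isometry (kuratowskiMap e he.1.continuous y) :=
    he.2.2 _ _ (lipschitzWith_kuratowskiMap _ _) (isometry_kuratowskiMap_comp he.1 _)
  refine hiso.injective (BoundedContinuousFunction.ext fun x => ?_)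
  rw [kuratowskiMap_apply, kuratowskiMap_apply, h]

lemma eq_id_of_lipschitzWith_one (he : IsInjectiveHull e) {φ : E → E} (hφ : LipschitzWith 1 φ)
    (hφe : φ ∘ e = e) : φ = id := by
  have hiso : Isometry φ := he.2.2 E φ hφ (hφe.symm ▸ he.1)
  funext y
  refine he.eq_of_forall_dist_eq fun x => ?_
  calc dist (φ y) (e x) = dist (φ y) (φ (e x)) := by rw [← Function.comp_apply (f := φ), hφe]
    _ = dist y (e x) := hiso.dist_eq y (e x)

lemma isContractingBarycenter [MeasurableSpace E] [BorelSpace E]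
    (he : IsInjectiveHull e) {β : P1 E → E} (hβ : LipschitzWith 1 β)
    (hβe : ∀ x, β (P1.dirac (e x)) = e x) : IsContractingBarycenter β := by
  have hid : β ∘ P1.dirac = id :=
    he.eq_id_of_lipschitzWith_one (by simpa using hβ.comp P1.lipschitzWith_dirac) (funext hβe)
  refine ⟨fun μ ν => by simpa [P1.edist_eq_W1] using hβ μ ν, fun y μ hμ => ?_⟩
  obtain rfl : μ = P1.dirac y := Subtype.ext hμ
  exact congrFun hid y

end IsInjectiveHull

end InjectiveHull

/-- **Lemma 3.2.** Let `e : X → E` be an injective hull of `X` and let `S ⊆ P₁(X)` contain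
all Dirac measures. If `β` is `1`-Lipschitz on `S` (w.r.t. `W₁`) with `β δ_x = x`, then
there exists a contracting barycenter map `β̄ : P₁(E) → E` with `β̄ (e_♯ s) = e (β s)` for
all `s ∈ S`. -/
theorem barycenter_extends_to_injective_hull
    {X E : Type u} [MetricSpace X] [MeasurableSpace X] [BorelSpace X]
    [MetricSpace E] [MeasurableSpace E] [BorelSpace E]
    (e : X → E) (he : IsInjectiveHull e)
    (S : Set (P1 X))
    (hS : ∀ x : X, ∀ μ : P1 X, μ.1 = Measure.dirac x → μ ∈ S)
    (β : P1 X → X)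
    (hβLip : ∀ μ ∈ S, ∀ ν ∈ S, edist (β μ) (β ν) ≤ W1 μ.1 ν.1)
    (hβdirac : ∀ x : X, ∀ μ ∈ S, μ.1 = Measure.dirac x → β μ = x) :
    ∃ βbar : P1 E → E, IsContractingBarycenter βbar ∧
      ∀ μ ∈ S, ∀ ν : P1 E, ν.1 = (μ : Measure X).map e → βbar ν = e (β μ) := by
  let push : P1 X → P1 E := P1.map e he.1.lipschitz
  have hcontract (μ ν : S) : edist (e (β μ)) (e (β ν)) ≤ edist (push μ) (push ν) := by
    calc edist (e (β μ)) (e (β ν)) = edist (β μ) (β ν) := he.1.edist_eq _ _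
      _ ≤ W1 μ.1.1 ν.1.1 := hβLip μ μ.2 ν ν.2
      _ ≤ W1 (push μ).1 (push ν).1 := W1_le_W1_map he.1
          (push μ).2.aestronglyMeasurable_id (push ν).2.aestronglyMeasurable_id
  obtain ⟨βbar, hβbar, hext⟩ := he.2.1.exists_lipschitzWith_comp_eq hcontract
  refine ⟨βbar, he.isContractingBarycenter hβbar fun x => ?_, fun μ hμ ν hν => ?_⟩
  · have hx : P1.dirac x ∈ S := hS x _ rfl
    calc βbar (P1.dirac (e x)) = βbar (push (P1.dirac x)) :=
          congrArg βbar (P1.map_dirac he.1.lipschitz x).symm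
      _ = e (β (P1.dirac x)) := hext ⟨_, hx⟩
      _ = e x := congrArg e (hβdirac x _ hx rfl)
  · obtain rfl : ν = push μ := Subtype.ext hν
    exact hext ⟨μ, hμ⟩
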